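/- FC(6, 9) ≤ 76; that is, every family of 76 distinct 6-element subsets of {1,…,9} whose universe equals {1,…,9} is FC. -/

import Mathlib

/-- The universe of a family of finite sets: the union of all its members. -/
def famUniverse (A : Finset (Finset ℕ)) : Finset ℕ := A.sup id

/-- A family is union-closed if it is nonempty and closed under pairwise unions. -/
def UnionClosed (F : Finset (Finset ℕ)) : Prop :=
  F.Nonempty ∧ ∀ A ∈ F, ∀ B ∈ F, A ∪ B ∈ F

/-- A family `A` is FC (Frankl-Complete) if for every union-closed family `F`
containing `A`, some element of the universe of `A` belongs to at least half
of the members of `F`. -/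
def IsFC (A : Finset (Finset ℕ)) : Prop :=
  ∀ F : Finset (Finset ℕ), UnionClosed F → A ⊆ F →
    ∃ x ∈ famUniverse A, F.card ≤ 2 * (F.filter (fun S => x ∈ S)).card

/-- `IsKFamily k n A` means `A` is a family of (distinct) `k`-element subsets of
`[n] = {1, …, n}` whose universe equals `[n]`. -/
def IsKFamily (k n : ℕ) (A : Finset (Finset ℕ)) : Prop :=
  (∀ S ∈ A, S.card = k ∧ S ⊆ Finset.Icc 1 n) ∧ famUniverse A = Finset.Icc 1 n

/-- The set of positive integers `m` such that every family of `m` distinct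
`k`-element subsets of `[n]` with universe `[n]` is FC.  `FC(k, n)` is the least
element of this set, when it exists. -/
def FCwitnesses (k n : ℕ) : Set ℕ :=
  {m : ℕ | 0 < m ∧ ∀ A : Finset (Finset ℕ), A.card = m → IsKFamily k n A → IsFC A}

/-- Number of members of `B` of size `j` inside `Q`. -/
def lvl (B : Finset (Finset ℕ)) (j : ℕ) (Q : Finset ℕ) : ℕ :=
  ((Q.powersetCard j).filter (fun S => S ∈ B)).card

lemma card_between (X S : Finset ℕ) (b : ℕ) (hS : S ⊆ X) (hb : S.card ≤ b) :
    ((X.powersetCard b).filter (fun Q => S ⊆ Q)).card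
      = (X.card - S.card).choose (b - S.card) := by
  rw [← Finset.card_sdiff_of_subset hS, ← Finset.card_powersetCard]
  refine Finset.card_bij' (fun Q _ => Q \ S) (fun R _ => R ∪ S) ?_ ?_ ?_ ?_
  · intro Q hQ
    simp only [Finset.mem_filter, Finset.mem_powersetCard] at hQ ⊢
    refine ⟨Finset.sdiff_subset_sdiff hQ.1.1 subset_rfl, ?_⟩
    rw [Finset.card_sdiff_of_subset hQ.2, hQ.1.2]
  · intro R hR
    simp only [Finset.mem_filter, Finset.mem_powersetCard] at hR ⊢
    have hd : Disjoint R S := Finset.disjoint_of_subset_left hR.1 Finset.sdiff_disjoint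
    refine ⟨⟨Finset.union_subset (hR.1.trans Finset.sdiff_subset) hS, ?_⟩,
      Finset.subset_union_right⟩
    rw [Finset.card_union_of_disjoint hd]
    omega
  · intro Q hQ
    simp only [Finset.mem_filter] at hQ
    exact Finset.sdiff_union_of_subset hQ.2
  · intro R hR
    simp only [Finset.mem_powersetCard] at hR
    have hd : Disjoint R S := Finset.disjoint_of_subset_left hR.1 Finset.sdiff_disjoint
    exact Finset.union_sdiff_cancel_right hd

lemma double_count (B : Finset (Finset ℕ)) (X : Finset ℕ) (n j b c : ℕ) (hX : X.card = n)
    (hjb : j ≤ b) (hc : (n - j).choose (b - j) = c) :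
    ∑ Q ∈ X.powersetCard b, lvl B j Q = c * lvl B j X := by
  have h1 : ∀ Q ∈ X.powersetCard b, lvl B j Q =
      (((X.powersetCard j).filter (fun S => S ∈ B)).filter (fun S => S ⊆ Q)).card := by
    intro Q hQ
    rw [Finset.mem_powersetCard] at hQ
    unfold lvl
    congr 1
    ext S
    simp only [Finset.mem_filter, Finset.mem_powersetCard]
    constructor
    · rintro ⟨⟨a, b⟩, c⟩
      exact ⟨⟨⟨a.trans hQ.1, b⟩, c⟩, a⟩
    · rintro ⟨⟨⟨a, b⟩, c⟩, d⟩
      exact ⟨⟨d, b⟩, c⟩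
  rw [Finset.sum_congr rfl h1]
  have h2 := Finset.sum_card_bipartiteAbove_eq_sum_card_bipartiteBelow
    (s := X.powersetCard b) (t := (X.powersetCard j).filter (fun S => S ∈ B))
    (fun Q S => S ⊆ Q)
  unfold Finset.bipartiteAbove Finset.bipartiteBelow at h2
  rw [h2, Finset.sum_congr rfl (g := fun _ => c)]
  · simp [lvl, mul_comm]
  · intro S hS
    simp only [Finset.mem_filter, Finset.mem_powersetCard] at hS
    rw [card_between X S b hS.1.1 (by omega), hX, hS.1.2, hc]

lemma lvl_le (B : Finset (Finset ℕ)) (j : ℕ) (Q : Finset ℕ) :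
    lvl B j Q ≤ Q.card.choose j := by
  unfold lvl
  exact (Finset.card_filter_le _ _).trans (Finset.card_powersetCard _ _).le

lemma avoid (B : Finset (Finset ℕ)) (hB : ∀ S ∈ B, ∀ T ∈ B, S ∪ T ∈ B) (Q : Finset ℕ)
    (hne : Q.Nonempty) (hQ : Q ∉ B) : ∃ x ∈ Q, ∀ S ∈ B, S ⊆ Q → x ∉ S := by
  by_contra hcon
  push Not at hcon
  apply hQ
  choose! g hg using hcon
  have h : Q.sup' hne g ∈ B :=
    Finset.sup'_induction hne g (p := fun S => S ∈ B) (fun a ha b hb => hB a ha b hb)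
      (fun x hx => (hg x hx).1)
  have h2 : Q.sup' hne g = Q := by
    apply le_antisymm
    · exact Finset.sup'_le hne g (fun x hx => (hg x hx).2.1)
    · intro x hx
      exact (Finset.le_sup' g hx) (hg x hx).2.2
  rwa [h2] at h

lemma lvl_le_of_notMem (B : Finset (Finset ℕ)) (hB : ∀ S ∈ B, ∀ T ∈ B, S ∪ T ∈ B) (j : ℕ)
    (Q : Finset ℕ) (hne : Q.Nonempty) (hQ : Q ∉ B) :
    lvl B j Q ≤ (Q.card - 1).choose j := by
  obtain ⟨x, hx, h⟩ := avoid B hB Q hne hQ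
  rw [← Finset.card_erase_of_mem hx, ← Finset.card_powersetCard]
  apply Finset.card_le_card
  intro S hS
  simp only [Finset.mem_filter, Finset.mem_powersetCard] at hS ⊢
  exact ⟨Finset.subset_erase.2 ⟨hS.1.1, h S hS.2 hS.1.1⟩, hS.1.2⟩

lemma lvl_zero (B : Finset (Finset ℕ)) (j : ℕ) (Q : Finset ℕ)
    (h : ¬ ∃ S ∈ B, S ⊆ Q) : lvl B j Q = 0 := by
  unfold lvl
  rw [Finset.card_eq_zero, Finset.filter_eq_empty_iff]
  intro S hS hSB
  exact h ⟨S, hSB, (Finset.mem_powersetCard.1 hS).1⟩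

lemma lvl_eq_sum (B : Finset (Finset ℕ)) (j : ℕ) (X : Finset ℕ) :
    lvl B j X = ∑ Q ∈ X.powersetCard j, if Q ∈ B then 1 else 0 := by
  rw [← Finset.sum_filter, Finset.sum_const, smul_eq_mul, mul_one]
  rfl

/-- Averaging a level-`j` count over `b`-subsets. -/
lemma level_bound (B : Finset (Finset ℕ)) (hB : ∀ S ∈ B, ∀ T ∈ B, S ∪ T ∈ B)
    (X : Finset ℕ) (n j b c p q : ℕ) (hX : X.card = n) (hjb : j ≤ b) (hb : 0 < b)
    (hc : (n - j).choose (b - j) = c) (hp : b.choose j = p + q) (hq : (b - 1).choose j = q) :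
    c * lvl B j X ≤ p * lvl B b X + q * n.choose b := by
  rw [← double_count B X n j b c hX hjb hc, lvl_eq_sum B b X, Finset.mul_sum, ← hX,
    ← Finset.card_powersetCard b X, mul_comm q, ← smul_eq_mul (Finset.card _) q,
    ← Finset.sum_const, ← Finset.sum_add_distrib]
  apply Finset.sum_le_sum
  intro Q hQ
  rw [Finset.mem_powersetCard] at hQ
  by_cases h : Q ∈ B
  · have := lvl_le B j Q
    rw [hQ.2, hp] at this
    simpa [h] using this
  · have := lvl_le_of_notMem B hB j Q (Finset.card_pos.1 (by omega)) h
    rw [hQ.2, hq] at this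
    simpa [h] using this

/-- The local inequality on a six-set. -/
lemma local_six (B : Finset (Finset ℕ)) (hB : ∀ S ∈ B, ∀ T ∈ B, S ∪ T ∈ B)
    (X : Finset ℕ) (hX : X.card = 6) :
    3 * lvl B 3 X + 2 * lvl B 4 X ≤ 5 * lvl B 5 X + (if X ∈ B then 60 else 0)
      + (if (X ∉ B ∧ ∃ S ∈ B, S ⊆ X) then 35 else 0) := by
  have h4 := level_bound B hB X 6 4 5 2 4 1 hX (by norm_num) (by norm_num) (by decide)
    (by decide) (by decide)
  have h3 := level_bound B hB X 6 3 5 3 6 4 hX (by norm_num) (by norm_num) (by decide)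
    (by decide) (by decide)
  have h65 : Nat.choose 6 5 = 6 := by decide
  rw [h65] at h3 h4
  by_cases h : X ∈ B
  · have h5 := lvl_le B 5 X
    rw [hX, h65] at h5
    simp only [h, if_true, not_true, false_and, if_false]
    omega
  · by_cases h' : ∃ S ∈ B, S ⊆ X
    · have h5 := lvl_le_of_notMem B hB 5 X (Finset.card_pos.1 (by omega)) h
      rw [hX] at h5
      simp only [h, h', if_true, not_false_iff, true_and, if_false]
      norm_num at h5
      omega
    · rw [lvl_zero B 3 X h', lvl_zero B 4 X h']
      omega

lemma global_six (B : Finset (Finset ℕ)) (hB : ∀ S ∈ B, ∀ T ∈ B, S ∪ T ∈ B)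
    (U : Finset ℕ) (hU : U.card = 9) :
    60 * lvl B 3 U + 20 * lvl B 4 U ≤ 20 * lvl B 5 U + 60 * lvl B 6 U
      + 35 * ((U.powersetCard 6).filter (fun X => X ∉ B ∧ ∃ S ∈ B, S ⊆ X)).card := by
  have d3 := double_count B U 9 3 6 20 hU (by norm_num) (by decide)
  have d4 := double_count B U 9 4 6 10 hU (by norm_num) (by decide)
  have d5 := double_count B U 9 5 6 4 hU (by norm_num) (by decide)
  have h := Finset.sum_le_sum (fun X (hX : X ∈ U.powersetCard 6) =>
    local_six B hB X (Finset.mem_powersetCard.1 hX).2)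
  simp only [Finset.sum_add_distrib, ← Finset.mul_sum] at h
  rw [d3, d4, d5, ← Finset.sum_filter, ← Finset.sum_filter, Finset.sum_const, Finset.sum_const,
    smul_eq_mul, smul_eq_mul] at h
  have e : (Finset.filter (fun a => a ∈ B) (U.powersetCard 6)).card = lvl B 6 U := rfl
  rw [e] at h
  omega

/-- The counting facts about a fibre. -/
lemma fibre_ineq (A B : Finset (Finset ℕ)) (U : Finset ℕ) (hU : U.card = 9)
    (hA : A ⊆ U.powersetCard 6) (hAc : A.card = 76) (hBne : ∃ S ∈ B, S ⊆ U)
    (hB : ∀ S ∈ B, ∀ T ∈ B, S ∪ T ∈ B) (hAB : ∀ S ∈ A, ∀ T ∈ B, S ∪ T ∈ B) :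
    9 * lvl B 0 U + 7 * lvl B 1 U + 5 * lvl B 2 U + 3 * lvl B 3 U + lvl B 4 U
      ≤ lvl B 5 U + 3 * lvl B 6 U + 5 * lvl B 7 U + 7 * lvl B 8 U + 9 * lvl B 9 U := by
  have hmiss : ((U.powersetCard 6) \ A).card = 8 := by
    rw [Finset.card_sdiff_of_subset hA, hAc, Finset.card_powersetCard, hU]
    decide
  -- six-sets containing the avoided point are missing
  have key : ∀ Q, Q ⊆ U → 0 < Q.card → Q ∉ B → (∃ S ∈ B, S ⊆ Q) →
      (Q.card - 1).choose 5 ≤ ((Q.powersetCard 6) \ A).card := by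
    rintro Q hQU hQc hQ ⟨S, hS, hSQ⟩
    obtain ⟨x, hx, hav⟩ := avoid B hB Q (Finset.card_pos.1 hQc) hQ
    have := card_between Q {x} 6 (by simpa using hx) (by simp)
    simp only [Finset.card_singleton] at this
    rw [← this]
    apply Finset.card_le_card
    intro X hX
    rw [Finset.mem_filter] at hX
    rw [Finset.mem_sdiff]
    refine ⟨hX.1, fun hXA => ?_⟩
    refine hav _ (hAB X hXA S hS)
      (Finset.union_subset (Finset.mem_powersetCard.1 hX.1).1 hSQ) ?_
    exact Finset.mem_union_left _ (by simpa using hX.2)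
  have key8 : ∀ Q, Q ⊆ U → 0 < Q.card → Q ∉ B → (∃ S ∈ B, S ⊆ Q) →
      (Q.card - 1).choose 5 ≤ 8 := by
    intro Q h1 h2 h3 h4
    refine (key Q h1 h2 h3 h4).trans (hmiss ▸ Finset.card_le_card ?_)
    exact Finset.sdiff_subset_sdiff (Finset.powersetCard_mono h1) subset_rfl
  -- eight-sets and the nine-set above members are members
  have h8 : ∀ Z, Z ⊆ U → Z.card = 8 → (∃ S ∈ B, S ⊆ Z) → Z ∈ B := by
    intro Z h1 h2 h3
    by_contra h
    have := key8 Z h1 (by omega) h h3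
    rw [h2] at this
    exact absurd this (by decide)
  have h9 : U ∈ B := by
    by_contra h
    have := key8 U subset_rfl (by omega) h hBne
    rw [hU] at this
    exact absurd this (by decide)
  -- missing six-sets
  set Ms := (U.powersetCard 6).filter (fun X => X ∉ B ∧ ∃ S ∈ B, S ⊆ X) with hMs
  have hm8 : Ms.card ≤ 8 := by
    rw [← hmiss]
    apply Finset.card_le_card
    intro X hX
    rw [hMs, Finset.mem_filter] at hX
    obtain ⟨hX1, hX2, S, hS, hSX⟩ := hX
    rw [Finset.mem_sdiff]
    refine ⟨hX1, fun hXA => hX2 ?_⟩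
    have := hAB X hXA S hS
    rwa [Finset.union_eq_left.2 hSX] at this
  -- bad seven-sets
  set Ys := (U.powersetCard 7).filter (fun X => X ∉ B ∧ ∃ S ∈ B, S ⊆ X) with hYs
  have hY1 : Ys.card ≤ 1 := by
    rw [Finset.card_le_one]
    intro Y hY Y' hY'
    rw [hYs, Finset.mem_filter, Finset.mem_powersetCard] at hY hY'
    by_contra hne
    have k1 := key Y hY.1.1 (by omega) hY.2.1 hY.2.2
    have k2 := key Y' hY'.1.1 (by omega) hY'.2.1 hY'.2.2
    rw [hY.1.2] at k1
    rw [hY'.1.2] at k2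
    have c65 : Nat.choose (7 - 1) 5 = 6 := by decide
    rw [c65] at k1 k2
    have hi : ((Y.powersetCard 6 \ A) ∩ (Y'.powersetCard 6 \ A)).card ≤ 1 := by
      have hc : (Y ∩ Y').card ≤ 6 := by
        by_contra hc
        have e1 : Y ∩ Y' = Y := Finset.eq_of_subset_of_card_le Finset.inter_subset_left (by omega)
        have e2 : Y ∩ Y' = Y' :=
          Finset.eq_of_subset_of_card_le Finset.inter_subset_right (by omega)
        exact hne (e1.symm.trans e2)
      have hs : ((Y.powersetCard 6 \ A) ∩ (Y'.powersetCard 6 \ A)) ⊆ (Y ∩ Y').powersetCard 6 := by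
        intro X hX
        simp only [Finset.mem_inter, Finset.mem_sdiff, Finset.mem_powersetCard] at hX ⊢
        exact ⟨Finset.subset_inter hX.1.1.1 hX.2.1.1, hX.1.1.2⟩
      refine (Finset.card_le_card hs).trans ?_
      rw [Finset.card_powersetCard]
      exact (Nat.choose_le_choose 6 hc).trans (by decide)
    have hu : ((Y.powersetCard 6 \ A) ∪ (Y'.powersetCard 6 \ A)).card ≤ 8 := by
      rw [← hmiss]
      apply Finset.card_le_card
      exact Finset.union_subset
        (Finset.sdiff_subset_sdiff (Finset.powersetCard_mono hY.1.1) subset_rfl)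
        (Finset.sdiff_subset_sdiff (Finset.powersetCard_mono hY'.1.1) subset_rfl)
    have := Finset.card_union_add_card_inter (Y.powersetCard 6 \ A) (Y'.powersetCard 6 \ A)
    omega
  have g6 := global_six B hB U hU
  rw [← hMs] at g6
  -- level 2 against level 7
  have h27 : lvl B 2 U ≤ lvl B 7 U := by
    have d := double_count B U 9 2 7 21 hU (by norm_num) (by decide)
    have hle : ∑ Y ∈ U.powersetCard 7, lvl B 2 Y ≤ ∑ Y ∈ U.powersetCard 7,
        ((if Y ∈ B then 21 else 0) + if (Y ∉ B ∧ ∃ S ∈ B, S ⊆ Y) then 15 else 0) := by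
      apply Finset.sum_le_sum
      intro Y hY
      rw [Finset.mem_powersetCard] at hY
      by_cases h : Y ∈ B
      · have := lvl_le B 2 Y
        rw [hY.2] at this
        simpa [h] using this.trans (by decide : Nat.choose 7 2 ≤ 21)
      · by_cases h' : ∃ S ∈ B, S ⊆ Y
        · have := lvl_le_of_notMem B hB 2 Y (Finset.card_pos.1 (by omega)) h
          rw [hY.2] at this
          simp only [h, h', if_true, not_false_iff, true_and, if_false]
          simpa using this.trans (by decide : Nat.choose (7 - 1) 2 ≤ 15)
        · rw [lvl_zero B 2 Y h']
          exact Nat.zero_le _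
    rw [d, Finset.sum_add_distrib, ← Finset.sum_filter, ← Finset.sum_filter, Finset.sum_const,
      Finset.sum_const, smul_eq_mul, smul_eq_mul, ← hYs] at hle
    have e : (Finset.filter (fun a => a ∈ B) (U.powersetCard 7)).card = lvl B 7 U := rfl
    rw [e] at hle
    omega
  -- level 1 against level 8
  have h18le : ∀ Z ∈ U.powersetCard 8, lvl B 1 Z ≤ 8 * (if Z ∈ B then 1 else 0) := by
    intro Z hZ
    rw [Finset.mem_powersetCard] at hZ
    by_cases h : Z ∈ B
    · have := lvl_le B 1 Z
      rw [hZ.2] at this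
      simpa [h] using this
    · rw [lvl_zero B 1 Z (fun h' => h (h8 Z hZ.1 hZ.2 h'))]
      exact Nat.zero_le _
  have d18 := double_count B U 9 1 8 8 hU (by norm_num) (by decide)
  have h18 : lvl B 1 U ≤ lvl B 8 U := by
    have := Finset.sum_le_sum h18le
    rw [d18, ← Finset.mul_sum, ← lvl_eq_sum] at this
    omega
  have h99 : lvl B 9 U = 1 := by
    unfold lvl
    rw [← hU, Finset.powersetCard_self, Finset.filter_singleton, if_pos h9, Finset.card_singleton]
  have h0 : lvl B 0 U ≤ 1 := by simpa using lvl_le B 0 U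
  rcases Finset.eq_empty_or_nonempty Ms with hM | ⟨X, hX⟩
  · rw [hM, Finset.card_empty] at g6
    omega
  rw [hMs, Finset.mem_filter, Finset.mem_powersetCard] at hX
  obtain ⟨⟨hXU, hXc⟩, hXB, S, hS, hSX⟩ := hX
  have h18s : lvl B 1 U < lvl B 8 U := by
    obtain ⟨Z, hXZ, hZU, hZc⟩ :=
      Finset.exists_subsuperset_card_eq hXU (by omega : X.card ≤ 8) (by omega)
    have hZB : Z ∈ B := h8 Z hZU hZc ⟨S, hS, hSX.trans hXZ⟩
    have hlt : lvl B 1 Z < 8 * (if Z ∈ B then 1 else 0) := by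
      obtain ⟨x, hx, hav⟩ := avoid B hB X (Finset.card_pos.1 (by omega)) hXB
      rw [if_pos hZB]
      have hxB : {x} ∉ B := fun h => hav _ h (by simpa using hx) (by simp)
      have hs : (Z.powersetCard 1).filter (fun S => S ∈ B) ⊆ (Z.erase x).powersetCard 1 := by
        intro T hT
        simp only [Finset.mem_filter, Finset.mem_powersetCard] at hT ⊢
        refine ⟨Finset.subset_erase.2 ⟨hT.1.1, fun hxT => ?_⟩, hT.1.2⟩
        obtain ⟨y, rfl⟩ := Finset.card_eq_one.1 hT.1.2
        rw [Finset.mem_singleton] at hxT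
        subst hxT
        exact hxB hT.2
      have := Finset.card_le_card hs
      rw [Finset.card_powersetCard, Finset.card_erase_of_mem (hXZ hx), hZc] at this
      simp only [Nat.choose_one_right] at this
      unfold lvl
      omega
    have := Finset.sum_lt_sum h18le ⟨Z, Finset.mem_powersetCard.2 ⟨hZU, hZc⟩, hlt⟩
    rw [d18, ← Finset.mul_sum, ← lvl_eq_sum] at this
    omega
  by_cases hE : ∅ ∈ B
  · -- many seven-sets, few two-sets
    have h7 : 35 ≤ lvl B 7 U := by
      have hs := Finset.card_filter_add_card_filter_not
        (s := U.powersetCard 7) (fun Y => Y ∈ B)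
      have e : Ys = (U.powersetCard 7).filter (fun Y => ¬ Y ∈ B) := by
        rw [hYs]
        apply Finset.filter_congr
        intro Y _
        exact ⟨fun h => h.1, fun h => ⟨h, ∅, hE, Finset.empty_subset _⟩⟩
      rw [← e, Finset.card_powersetCard, hU] at hs
      have c97 : Nat.choose 9 7 = 36 := by decide
      have e2 : (Finset.filter (fun a => a ∈ B) (U.powersetCard 7)).card = lvl B 7 U := rfl
      omega
    have h2 : lvl B 2 U ≤ 31 := by
      have hx := lvl_le_of_notMem B hB 2 X (Finset.card_pos.1 (by omega)) hXB
      rw [hXc] at hx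
      have hs : (U.powersetCard 2).filter (fun S => S ∈ B) ⊆
          (X.powersetCard 2).filter (fun S => S ∈ B) ∪ (U.powersetCard 2 \ X.powersetCard 2) := by
        intro T hT
        simp only [Finset.mem_filter, Finset.mem_union, Finset.mem_sdiff] at hT ⊢
        tauto
      have hc := (Finset.card_le_card hs).trans (Finset.card_union_le _ _)
      rw [Finset.card_sdiff_of_subset (Finset.powersetCard_mono hXU), Finset.card_powersetCard,
        Finset.card_powersetCard, hU, hXc] at hc
      have c1 : Nat.choose 9 2 = 36 := by decide
      have c2 : Nat.choose 6 2 = 15 := by decide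
      have c3 : Nat.choose (6 - 1) 2 = 10 := by decide
      unfold lvl at hx ⊢
      omega
    omega
  · have h00 : lvl B 0 U = 0 := by
      unfold lvl
      rw [Finset.powersetCard_zero, Finset.filter_singleton, if_neg hE, Finset.card_empty]
    omega

lemma fibre_sum (B : Finset (Finset ℕ)) (U : Finset ℕ) (hU : U.card = 9)
    (hBU : B ⊆ U.powerset)
    (h : 9 * lvl B 0 U + 7 * lvl B 1 U + 5 * lvl B 2 U + 3 * lvl B 3 U + lvl B 4 U
      ≤ lvl B 5 U + 3 * lvl B 6 U + 5 * lvl B 7 U + 7 * lvl B 8 U + 9 * lvl B 9 U) :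
    0 ≤ ∑ S ∈ B, (2 * (S.card : ℤ) - 9) := by
  have e : B = U.powerset.filter (fun S => S ∈ B) := by
    ext S
    rw [Finset.mem_filter]
    exact ⟨fun h => ⟨hBU h, h⟩, fun h => h.2⟩
  have l : ∀ j : ℕ, ∑ S ∈ U.powersetCard j, (if S ∈ B then (2 * (S.card : ℤ) - 9) else 0)
      = (2 * (j : ℤ) - 9) * lvl B j U := by
    intro j
    rw [← Finset.sum_filter, Finset.sum_congr rfl (g := fun _ => 2 * (j : ℤ) - 9)]
    · rw [Finset.sum_const, nsmul_eq_mul, mul_comm]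
      rfl
    · intro S hS
      rw [Finset.mem_filter, Finset.mem_powersetCard] at hS
      rw [hS.1.2]
  rw [e, Finset.sum_filter, Finset.sum_powerset, hU, Finset.sum_congr rfl (fun j _ => l j)]
  simp only [Finset.sum_range_succ, Finset.sum_range_zero]
  push_cast
  omega

lemma total_sum (A F : Finset (Finset ℕ)) (U : Finset ℕ) (hU : U.card = 9)
    (hA : A ⊆ U.powersetCard 6) (hAc : A.card = 76)
    (hF : ∀ S ∈ F, ∀ T ∈ F, S ∪ T ∈ F) (hAF : A ⊆ F) :
    0 ≤ ∑ S ∈ F, (2 * ((S ∩ U).card : ℤ) - 9) := by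
  rw [← Finset.sum_fiberwise_of_maps_to (s := F) (t := F.image (fun S => S \ U))
    (g := fun S => S \ U) (fun S hS => Finset.mem_image_of_mem _ hS)]
  apply Finset.sum_nonneg
  intro T hT
  obtain ⟨S₀, hS₀, rfl⟩ := Finset.mem_image.1 hT
  set T := S₀ \ U with hTdef
  have hTU : Disjoint T U := Finset.sdiff_disjoint
  set B := U.powerset.filter (fun S => S ∪ T ∈ F) with hBdef
  have hBm : ∀ S, S ∈ B ↔ S ⊆ U ∧ S ∪ T ∈ F := by
    intro S
    rw [hBdef, Finset.mem_filter, Finset.mem_powerset]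
  have hsum : ∑ S ∈ F.filter (fun S => S \ U = T), (2 * ((S ∩ U).card : ℤ) - 9)
      = ∑ S ∈ B, (2 * (S.card : ℤ) - 9) := by
    refine Finset.sum_bij' (fun S _ => S ∩ U) (fun S _ => S ∪ T) ?_ ?_ ?_ ?_ ?_
    · intro S hS
      rw [Finset.mem_filter] at hS
      rw [hBm, ← hS.2, Finset.union_comm, Finset.sdiff_union_inter]
      exact ⟨Finset.inter_subset_right, hS.1⟩
    · intro S hS
      rw [hBm] at hS
      rw [Finset.mem_filter]
      refine ⟨hS.2, ?_⟩
      rw [Finset.union_sdiff_distrib, Finset.sdiff_eq_empty_iff_subset.2 hS.1,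
        Finset.empty_union, Finset.sdiff_eq_self_of_disjoint hTU]
    · intro S hS
      rw [Finset.mem_filter] at hS
      rw [← hS.2, Finset.union_comm, Finset.sdiff_union_inter]
    · intro S hS
      rw [hBm] at hS
      rw [Finset.union_inter_distrib_right, Finset.inter_eq_left.2 hS.1,
        Finset.disjoint_iff_inter_eq_empty.1 hTU, Finset.union_empty]
    · intro S _
      rfl
  rw [hsum]
  apply fibre_sum B U hU (Finset.filter_subset _ _)
  apply fibre_ineq A B U hU hA hAc
  · refine ⟨S₀ ∩ U, ?_, Finset.inter_subset_right⟩
    rw [hBm, hTdef, Finset.union_comm, Finset.sdiff_union_inter]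
    exact ⟨Finset.inter_subset_right, hS₀⟩
  · intro S hS S' hS'
    rw [hBm] at hS hS' ⊢
    refine ⟨Finset.union_subset hS.1 hS'.1, ?_⟩
    rw [Finset.union_union_distrib_right]
    exact hF _ hS.2 _ hS'.2
  · intro S hS S' hS'
    rw [hBm] at hS' ⊢
    refine ⟨Finset.union_subset (Finset.mem_powersetCard.1 (hA hS)).1 hS'.1, ?_⟩
    rw [Finset.union_assoc]
    exact hF _ (hAF hS) _ hS'.2

/-- FC(6, 9) ≤ 76: every family of 76 distinct 6-element subsets of {1, …, 9}
with universe {1, …, 9} is FC. -/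
theorem FC_upper_bound_6_9 :
    ∀ A : Finset (Finset ℕ), A.card = 76 → IsKFamily 6 9 A → IsFC A := by
  intro A hAc hA F hF hAF
  have hU : (Finset.Icc 1 9).card = 9 := by decide
  have hA6 : A ⊆ (Finset.Icc 1 9).powersetCard 6 := by
    intro S hS
    rw [Finset.mem_powersetCard]
    exact ⟨(hA.1 S hS).2, (hA.1 S hS).1⟩
  have h := total_sum A F (Finset.Icc 1 9) hU hA6 hAc hF.2 hAF
  rw [hA.2]
  by_contra hcon
  push Not at hcon
  have hdc : ∑ S ∈ F, (S ∩ Finset.Icc 1 9).card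
      = ∑ x ∈ Finset.Icc 1 9, (F.filter (fun S => x ∈ S)).card := by
    have h2 := Finset.sum_card_bipartiteAbove_eq_sum_card_bipartiteBelow
      (s := F) (t := Finset.Icc 1 9) (fun S x => x ∈ S)
    unfold Finset.bipartiteAbove Finset.bipartiteBelow at h2
    rw [← h2]
    apply Finset.sum_congr rfl
    intro S _
    congr 1
    ext x
    rw [Finset.mem_inter, Finset.mem_filter, and_comm]
  have hlt : ∑ x ∈ Finset.Icc 1 9, 2 * (F.filter (fun S => x ∈ S)).card
      < ∑ x ∈ Finset.Icc 1 9, F.card :=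
    Finset.sum_lt_sum_of_nonempty ⟨1, by decide⟩ hcon
  rw [← Finset.mul_sum, ← hdc, Finset.sum_const, hU, smul_eq_mul] at hlt
  rw [Finset.sum_sub_distrib, ← Finset.mul_sum, Finset.sum_const, nsmul_eq_mul,
    ← Nat.cast_sum] at h
  omega
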